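/- Let C be a spherical fusion category over a commutative ring k and I a representative set of its simple objects. Then for all objects X, Y of C: Σ_{a,b∈I} dim(a)·dim(b)·N^𝟙_{X⊗a⊗Y⊗b} = dim(X)·dim(Y)·dim(C) in k, where the multiplicity N^𝟙_Z = rank_k Hom_C(Z, 𝟙) is regarded in k via the canonical ring map ℤ → k. -/

import Mathlib

open CategoryTheory CategoryTheory.Limits MonoidalCategory

universe v u w

/-- A pivotal category: a monoidal category in which every object is equipped with a dual
object and with evaluation/coevaluation morphisms forming a left duality and a right
duality, such that left and right duals of morphisms coincide, the left and right
monoidal constraints coincide, and the left and right evaluations of the unit coincide. -/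
class PivotalCat (C : Type u) [Category.{v} C] [MonoidalCategory C] where
  dual : C → C
  evl : ∀ X : C, dual X ⊗ X ⟶ 𝟙_ C
  coevl : ∀ X : C, 𝟙_ C ⟶ X ⊗ dual X
  evr : ∀ X : C, X ⊗ dual X ⟶ 𝟙_ C
  coevr : ∀ X : C, 𝟙_ C ⟶ dual X ⊗ X
  left_zigzag₁ : ∀ X : C,
    (λ_ X).inv ≫ (coevl X ▷ X) ≫ (α_ X (dual X) X).hom ≫ (X ◁ evl X) ≫ (ρ_ X).hom = 𝟙 X
  left_zigzag₂ : ∀ X : C,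
    (ρ_ (dual X)).inv ≫ (dual X ◁ coevl X) ≫ (α_ (dual X) X (dual X)).inv ≫
      (evl X ▷ dual X) ≫ (λ_ (dual X)).hom = 𝟙 (dual X)
  right_zigzag₁ : ∀ X : C,
    (ρ_ X).inv ≫ (X ◁ coevr X) ≫ (α_ X (dual X) X).inv ≫ (evr X ▷ X) ≫ (λ_ X).hom = 𝟙 X
  right_zigzag₂ : ∀ X : C,
    (λ_ (dual X)).inv ≫ (coevr X ▷ dual X) ≫ (α_ (dual X) X (dual X)).hom ≫
      (dual X ◁ evr X) ≫ (ρ_ (dual X)).hom = 𝟙 (dual X)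
  ldual_eq_rdual : ∀ {X Y : C} (f : X ⟶ Y),
    (ρ_ (dual Y)).inv ≫ (dual Y ◁ coevl X) ≫ (dual Y ◁ (f ▷ dual X)) ≫
      (α_ (dual Y) Y (dual X)).inv ≫ (evl Y ▷ dual X) ≫ (λ_ (dual X)).hom =
    (λ_ (dual Y)).inv ≫ (coevr X ▷ dual Y) ≫ ((dual X ◁ f) ▷ dual Y) ≫
      (α_ (dual X) Y (dual Y)).hom ≫ (dual X ◁ evr Y) ≫ (ρ_ (dual X)).hom
  constraint_eq : ∀ X Y : C,
    (ρ_ (dual X ⊗ dual Y)).inv ≫ ((dual X ⊗ dual Y) ◁ coevl (Y ⊗ X)) ≫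
      (α_ (dual X) (dual Y) ((Y ⊗ X) ⊗ dual (Y ⊗ X))).hom ≫
      (dual X ◁ (α_ (dual Y) (Y ⊗ X) (dual (Y ⊗ X))).inv) ≫
      (dual X ◁ (((α_ (dual Y) Y X).inv ≫ (evl Y ▷ X) ≫ (λ_ X).hom) ▷ dual (Y ⊗ X))) ≫
      (α_ (dual X) X (dual (Y ⊗ X))).inv ≫ (evl X ▷ dual (Y ⊗ X)) ≫ (λ_ (dual (Y ⊗ X))).hom =
    (λ_ (dual X ⊗ dual Y)).inv ≫ (coevr (Y ⊗ X) ▷ (dual X ⊗ dual Y)) ≫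
      (α_ (dual (Y ⊗ X)) (Y ⊗ X) (dual X ⊗ dual Y)).hom ≫
      (dual (Y ⊗ X) ◁ ((α_ Y X (dual X ⊗ dual Y)).hom ≫ (Y ◁ (α_ X (dual X) (dual Y)).inv) ≫
        (Y ◁ (evr X ▷ dual Y)) ≫ (Y ◁ (λ_ (dual Y)).hom) ≫ evr Y)) ≫
      (ρ_ (dual (Y ⊗ X))).hom
  ev_unit : (ρ_ (dual (𝟙_ C))).inv ≫ evl (𝟙_ C) = (λ_ (dual (𝟙_ C))).inv ≫ evr (𝟙_ C)

namespace PivotalCat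

variable {C : Type u} [Category.{v} C] [MonoidalCategory C] [PivotalCat C]

/-- The (common left = right) dual of a morphism. -/
def pdual {X Y : C} (f : X ⟶ Y) : dual Y ⟶ dual X :=
  (ρ_ (dual Y)).inv ≫ (dual Y ◁ coevl X) ≫ (dual Y ◁ (f ▷ dual X)) ≫
    (α_ (dual Y) Y (dual X)).inv ≫ (evl Y ▷ dual X) ≫ (λ_ (dual X)).hom

/-- The (common left = right) pivotal monoidal constraint `X* ⊗ Y* ⟶ (Y ⊗ X)*`. -/
def mcon (X Y : C) : dual X ⊗ dual Y ⟶ dual (Y ⊗ X) :=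
  (ρ_ (dual X ⊗ dual Y)).inv ≫ ((dual X ⊗ dual Y) ◁ coevl (Y ⊗ X)) ≫
    (α_ (dual X) (dual Y) ((Y ⊗ X) ⊗ dual (Y ⊗ X))).hom ≫
    (dual X ◁ (α_ (dual Y) (Y ⊗ X) (dual (Y ⊗ X))).inv) ≫
    (dual X ◁ (((α_ (dual Y) Y X).inv ≫ (evl Y ▷ X) ≫ (λ_ X).hom) ▷ dual (Y ⊗ X))) ≫
    (α_ (dual X) X (dual (Y ⊗ X))).inv ≫ (evl X ▷ dual (Y ⊗ X)) ≫ (λ_ (dual (Y ⊗ X))).hom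

/-- The left trace of an endomorphism. -/
def trl {X : C} (f : X ⟶ X) : 𝟙_ C ⟶ 𝟙_ C := coevr X ≫ (dual X ◁ f) ≫ evl X

/-- The right trace of an endomorphism. -/
def trr {X : C} (f : X ⟶ X) : 𝟙_ C ⟶ 𝟙_ C := coevl X ≫ (f ▷ dual X) ≫ evr X

/-- The left dimension of an object, as an endomorphism of the unit. -/
def diml (X : C) : 𝟙_ C ⟶ 𝟙_ C := trl (𝟙 X)

/-- The right dimension of an object, as an endomorphism of the unit. -/
def dimr (X : C) : 𝟙_ C ⟶ 𝟙_ C := trr (𝟙 X)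

/-- The permutation map `σ_{X,Y} : Hom(𝟙, X ⊗ Y) → Hom(𝟙, Y ⊗ X)`,
`α ↦ (ev_l X ⊗ id_{Y⊗X}) ∘ (id_{X*} ⊗ α ⊗ id_X) ∘ coev_r X`. -/
def sigmaMap (X Y : C) (a : 𝟙_ C ⟶ X ⊗ Y) : 𝟙_ C ⟶ Y ⊗ X :=
  coevr X ≫ (dual X ◁ (λ_ X).inv) ≫ (dual X ◁ (a ▷ X)) ≫ (dual X ◁ (α_ X Y X).hom) ≫
    (α_ (dual X) X (Y ⊗ X)).inv ≫ (evl X ▷ (Y ⊗ X)) ≫ (λ_ (Y ⊗ X)).hom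

end PivotalCat

/-- A pivotal category is spherical when left and right traces coincide. -/
class SphericalCat (C : Type u) [Category.{v} C] [MonoidalCategory C] [PivotalCat C] : Prop where
  tr_eq : ∀ {X : C} (f : X ⟶ X), PivotalCat.trl f = PivotalCat.trr f
/-- An object `X` of a `k`-linear category is simple if `λ ↦ λ • id_X` is a bijection
`k → End X`. -/
def IsSimpleObj (k : Type w) [CommRing k] {C : Type u} [Category.{v} C]
    [Preadditive C] [CategoryTheory.Linear k C] (X : C) : Prop :=
  Function.Bijective fun a : k => a • 𝟙 X

/-- A monoidal `k`-category: the hom-sets are `k`-modules, composition and the monoidal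
product are `k`-bilinear (all this is encoded in the instance parameters), and
`End(𝟙)` is free of rank one via `λ ↦ λ • id`. -/
class MonoidalKCat (k : Type w) [CommRing k] (C : Type u) [Category.{v} C]
    [Preadditive C] [CategoryTheory.Linear k C] [MonoidalCategory C]
    [MonoidalPreadditive C] [CategoryTheory.MonoidalLinear k C] : Prop where
  unit_free : Function.Bijective fun a : k => a • 𝟙 (𝟙_ C)

/-- The identification `End(𝟙) = k` of a monoidal `k`-category. -/
noncomputable def toScalar (k : Type w) [CommRing k] {C : Type u} [Category.{v} C]
    [Preadditive C] [CategoryTheory.Linear k C] [MonoidalCategory C]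
    [MonoidalPreadditive C] [CategoryTheory.MonoidalLinear k C] [MonoidalKCat k C]
    (f : 𝟙_ C ⟶ 𝟙_ C) : k :=
  (Equiv.ofBijective (fun a : k => a • 𝟙 (𝟙_ C))
    (MonoidalKCat.unit_free (k := k) (C := C))).symm f

/-- The left dimension of an object as an element of `k`. -/
noncomputable def sdiml (k : Type w) [CommRing k] {C : Type u} [Category.{v} C]
    [Preadditive C] [CategoryTheory.Linear k C] [MonoidalCategory C]
    [MonoidalPreadditive C] [CategoryTheory.MonoidalLinear k C] [PivotalCat C]
    [MonoidalKCat k C] (X : C) : k :=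
  toScalar k (PivotalCat.diml X)

/-- The right dimension of an object as an element of `k`. -/
noncomputable def sdimr (k : Type w) [CommRing k] {C : Type u} [Category.{v} C]
    [Preadditive C] [CategoryTheory.Linear k C] [MonoidalCategory C]
    [MonoidalPreadditive C] [CategoryTheory.MonoidalLinear k C] [PivotalCat C]
    [MonoidalKCat k C] (X : C) : k :=
  toScalar k (PivotalCat.dimr X)

/-- A pre-fusion category over `k`: a pivotal `k`-category in which every finite family of
objects has a direct sum, every object is a finite direct sum of simple objects, and there
are no nonzero morphisms between non-isomorphic simple objects. -/
class PreFusionCat (k : Type w) [CommRing k] (C : Type u) [Category.{v} C]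
    [Preadditive C] [CategoryTheory.Linear k C] [MonoidalCategory C]
    [MonoidalPreadditive C] [CategoryTheory.MonoidalLinear k C]
    [CategoryTheory.Limits.HasFiniteBiproducts C] [PivotalCat C] [MonoidalKCat k C] : Prop where
  semisimple : ∀ X : C, ∃ (n : ℕ) (obj : Fin n → C) (p : ∀ a, X ⟶ obj a) (q : ∀ a, obj a ⟶ X),
    (∀ a, IsSimpleObj k (obj a)) ∧ (∑ a, p a ≫ q a = 𝟙 X) ∧
    (∀ a, q a ≫ p a = 𝟙 (obj a)) ∧ (∀ a b, a ≠ b → q a ≫ p b = 0)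
  simple_hom_zero : ∀ {i j : C}, IsSimpleObj k i → IsSimpleObj k j →
    IsEmpty (i ≅ j) → ∀ f : i ⟶ j, f = 0

/-- A fusion category over `k`: a pre-fusion category with finitely many isomorphism
classes of simple objects. -/
class FusionCat (k : Type w) [CommRing k] (C : Type u) [Category.{v} C]
    [Preadditive C] [CategoryTheory.Linear k C] [MonoidalCategory C]
    [MonoidalPreadditive C] [CategoryTheory.MonoidalLinear k C]
    [CategoryTheory.Limits.HasFiniteBiproducts C] [PivotalCat C] [MonoidalKCat k C]
    [PreFusionCat k C] : Prop where
  finitely_many_simples : ∃ S : Set C, S.Finite ∧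
    ∀ i : C, IsSimpleObj k i → ∃ j ∈ S, Nonempty (i ≅ j)

/-- A representative set of simple objects: it contains the unit object, consists of simple
objects, and every simple object is isomorphic to exactly one of its elements. -/
def IsRepresentativeSet (k : Type w) [CommRing k] (C : Type u) [Category.{v} C]
    [Preadditive C] [CategoryTheory.Linear k C] [MonoidalCategory C] (I : Set C) : Prop :=
  (𝟙_ C) ∈ I ∧ (∀ i ∈ I, IsSimpleObj k i) ∧
    ∀ X : C, IsSimpleObj k X → ∃! i, i ∈ I ∧ Nonempty (X ≅ i)

/-- The dimension of a fusion category with (finite) representative set `I` of simple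
objects: `dim C = ∑_{i ∈ I} dim_l(i) · dim_r(i)`. -/
noncomputable def catDim (k : Type w) [CommRing k] {C : Type u} [Category.{v} C]
    [Preadditive C] [CategoryTheory.Linear k C] [MonoidalCategory C]
    [MonoidalPreadditive C] [CategoryTheory.MonoidalLinear k C] [PivotalCat C]
    [MonoidalKCat k C] (I : Finset C) : k :=
  ∑ i ∈ I, sdiml k i * sdimr k i

/-!
Frobenius reciprocity gives `Hom(Z ⊗ b, 𝟙) ≅ Hom(b, Z*)`, so summing `dim_r(b) N^𝟙_{Z ⊗ b}` over
the representatives `b` of the simple objects adds up the dimensions of the simple summands of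
`Z*`, and the result is `dim_r(Z*) = dim_l(Z)`. For `Z = X ⊗ a ⊗ Y` this is
`dim_l(X) dim_l(a) dim_l(Y)` by multiplicativity of the left dimension; multiplying by `dim_r(a)`
and summing over `a` produces `dim_l(X) dim_l(Y) dim(C)`.

Both `dim_r(Z*) = dim_l(Z)` and multiplicativity rest on the constraint `X* ⊗ Y* ≅ (Y ⊗ X)*`
transporting the nested left duality and the nested right duality to those of `Y ⊗ X`.
-/

section DualIso

variable {C : Type u} [Category.{v} C] [MonoidalCategory C]

theorem coevaluation_comp_rightDualIso_hom {X Y₁ Y₂ : C} (p₁ : ExactPairing X Y₁)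
    (p₂ : ExactPairing X Y₂) : η_ X Y₁ ≫ X ◁ (rightDualIso p₁ p₂).hom = η_ X Y₂ :=
  (@coevaluation_comp_rightAdjointMate C _ _ X X ⟨Y₂⟩ ⟨Y₁⟩ (𝟙 X)).trans (by simp)

theorem rightDualIso_hom_comp_evaluation {X Y₁ Y₂ : C} (p₁ : ExactPairing X Y₁)
    (p₂ : ExactPairing X Y₂) : (rightDualIso p₁ p₂).hom ▷ X ≫ ε_ X Y₂ = ε_ X Y₁ :=
  (@rightAdjointMate_comp_evaluation C _ _ X X ⟨Y₂⟩ ⟨Y₁⟩ (𝟙 X)).trans (by simp)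

theorem coevaluation_comp_leftDualIso_hom {X₁ X₂ Y : C} (p₁ : ExactPairing X₁ Y)
    (p₂ : ExactPairing X₂ Y) : η_ X₁ Y ≫ (leftDualIso p₁ p₂).hom ▷ Y = η_ X₂ Y :=
  (@coevaluation_comp_leftAdjointMate C _ _ Y Y ⟨X₂⟩ ⟨X₁⟩ (𝟙 Y)).trans (by simp)

theorem leftDualIso_hom_comp_evaluation {X₁ X₂ Y : C} (p₁ : ExactPairing X₁ Y)
    (p₂ : ExactPairing X₂ Y) : Y ◁ (leftDualIso p₁ p₂).hom ≫ ε_ X₂ Y = ε_ X₁ Y :=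
  (@leftAdjointMate_comp_evaluation C _ _ Y Y ⟨X₂⟩ ⟨X₁⟩ (𝟙 Y)).trans (by simp)

end DualIso

namespace PivotalCat

variable {C : Type u} [Category.{v} C] [MonoidalCategory C] [PivotalCat C]

/-- The left duality `(evl, coevl)`, for which `dual X` is a right dual of `X` in Mathlib's
convention. -/
instance leftExactPairing (X : C) : ExactPairing X (dual X) where
  coevaluation' := coevl X
  evaluation' := evl X
  coevaluation_evaluation' := by
    rw [← cancel_epi (ρ_ _).inv, ← cancel_mono (λ_ _).hom]
    simpa using left_zigzag₂ X
  evaluation_coevaluation' := by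
    rw [← cancel_epi (λ_ _).inv, ← cancel_mono (ρ_ _).hom]
    simpa using left_zigzag₁ X

/-- The right duality `(evr, coevr)`, for which `dual X` is a left dual of `X` in Mathlib's
convention. -/
instance rightExactPairing (X : C) : ExactPairing (dual X) X where
  coevaluation' := coevr X
  evaluation' := evr X
  coevaluation_evaluation' := by
    rw [← cancel_epi (ρ_ _).inv, ← cancel_mono (λ_ _).hom]
    simpa using right_zigzag₁ X
  evaluation_coevaluation' := by
    rw [← cancel_epi (λ_ _).inv, ← cancel_mono (ρ_ _).hom]
    simpa using right_zigzag₂ X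

theorem coevl_comp_whiskerLeft_pdual {X Y : C} (f : X ⟶ Y) :
    coevl Y ≫ Y ◁ pdual f = coevl X ≫ f ▷ dual X :=
  @coevaluation_comp_rightAdjointMate C _ _ X Y ⟨dual X⟩ ⟨dual Y⟩ f

theorem pdual_eq_leftAdjointMate {X Y : C} (f : X ⟶ Y) :
    pdual f = @leftAdjointMate C _ _ X Y ⟨dual X⟩ ⟨dual Y⟩ f :=
  ldual_eq_rdual f

theorem coevr_comp_pdual_whiskerRight {X Y : C} (f : X ⟶ Y) :
    coevr Y ≫ pdual f ▷ Y = coevr X ≫ dual X ◁ f := by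
  rw [pdual_eq_leftAdjointMate]
  exact @coevaluation_comp_leftAdjointMate C _ _ X Y ⟨dual X⟩ ⟨dual Y⟩ f

theorem whiskerLeft_pdual_comp_evr {X Y : C} (f : X ⟶ Y) :
    X ◁ pdual f ≫ evr X = f ▷ dual Y ≫ evr Y := by
  rw [pdual_eq_leftAdjointMate]
  exact @leftAdjointMate_comp_evaluation C _ _ X Y ⟨dual X⟩ ⟨dual Y⟩ f

theorem trr_comp_comm {X Y : C} (f : X ⟶ Y) (g : Y ⟶ X) : trr (f ≫ g) = trr (g ≫ f) :=
  calc
    trr (f ≫ g) = (coevl X ≫ f ▷ dual X) ≫ g ▷ dual X ≫ evr X := by simp [trr]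
    _ = coevl Y ≫ g ▷ dual Y ≫ X ◁ pdual f ≫ evr X := by
      rw [← coevl_comp_whiskerLeft_pdual, Category.assoc, whisker_exchange_assoc]
    _ = trr (g ≫ f) := by simp [trr, whiskerLeft_pdual_comp_evr]

theorem dimr_congr {X Y : C} (e : X ≅ Y) : dimr X = dimr Y := by
  rw [dimr, dimr, ← e.hom_inv_id, trr_comp_comm, e.inv_hom_id]

theorem dimr_eq_coevl_comp_evr (X : C) : dimr X = coevl X ≫ evr X := by
  simp [dimr, trr]

theorem diml_eq_coevr_comp_evl (X : C) : diml X = coevr X ≫ evl X := by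
  simp [diml, trl]

theorem mcon_eq_rightDualIso_hom (X Y : C) :
    mcon X Y = (rightDualIso (X := Y ⊗ X) ExactPairing.tensor (leftExactPairing (Y ⊗ X))).hom := by
  change _ = (ρ_ _).inv ≫ _ ◁ coevl (Y ⊗ X) ≫ _ ◁ 𝟙 (Y ⊗ X) ▷ _ ≫ (α_ _ _ _).inv ≫
    (𝟙 _ ⊗≫ dual X ◁ evl Y ▷ X ⊗≫ evl X) ▷ _ ≫ (λ_ _).hom
  rw [mcon]
  monoidal

theorem mcon_eq_leftDualIso_hom (X Y : C) :
    mcon X Y = (leftDualIso (Y := Y ⊗ X) ExactPairing.tensor (rightExactPairing (Y ⊗ X))).hom := by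
  refine (constraint_eq X Y).trans ?_
  change _ = (λ_ _).inv ≫ coevr (Y ⊗ X) ▷ _ ≫ (_ ◁ 𝟙 (Y ⊗ X)) ▷ _ ≫ (α_ _ _ _).hom ≫
    _ ◁ (𝟙 _ ⊗≫ Y ◁ evr X ▷ dual Y ⊗≫ evr Y) ≫ (ρ_ _).hom
  monoidal

instance isIso_mcon (X Y : C) : IsIso (mcon X Y) := by
  rw [mcon_eq_rightDualIso_hom]
  infer_instance

theorem tensor_coevl_comp_whiskerLeft_mcon (X Y : C) :
    (coevl Y ⊗≫ (Y ◁ coevl X) ▷ dual Y ⊗≫ 𝟙 _) ≫ (Y ⊗ X) ◁ mcon X Y = coevl (Y ⊗ X) := by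
  rw [mcon_eq_rightDualIso_hom]
  exact coevaluation_comp_rightDualIso_hom (X := Y ⊗ X) (Y₁ := dual X ⊗ dual Y) .tensor _

theorem mcon_whiskerRight_comp_evl (X Y : C) :
    mcon X Y ▷ (Y ⊗ X) ≫ evl (Y ⊗ X) = 𝟙 _ ⊗≫ dual X ◁ (evl Y ▷ X) ⊗≫ evl X := by
  rw [mcon_eq_rightDualIso_hom]
  exact rightDualIso_hom_comp_evaluation ExactPairing.tensor _

theorem tensor_coevr_comp_mcon_whiskerRight (X Y : C) :
    (coevr X ⊗≫ (dual X ◁ coevr Y) ▷ X ⊗≫ 𝟙 _) ≫ mcon X Y ▷ (Y ⊗ X) = coevr (Y ⊗ X) := by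
  rw [mcon_eq_leftDualIso_hom]
  exact coevaluation_comp_leftDualIso_hom (X₁ := dual X ⊗ dual Y) (Y := Y ⊗ X) .tensor _

theorem diml_tensor (X Y : C) :
    diml (X ⊗ Y) = coevr Y ≫ dual Y ◁ ((λ_ Y).inv ≫ diml X ▷ Y ≫ (λ_ Y).hom) ≫ evl Y := by
  rw [diml_eq_coevr_comp_evl, ← tensor_coevr_comp_mcon_whiskerRight, Category.assoc,
    mcon_whiskerRight_comp_evl, diml_eq_coevr_comp_evl]
  monoidal

theorem evl_unit_comp_coevl_unit :
    ((ρ_ _).inv ≫ evl (𝟙_ C)) ≫ coevl (𝟙_ C) ≫ (λ_ _).hom = 𝟙 (dual (𝟙_ C)) :=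
  calc
    _ = 𝟙 _ ⊗≫ (evl (𝟙_ C) ▷ 𝟙_ C ≫ 𝟙_ C ◁ coevl (𝟙_ C)) ⊗≫ 𝟙 _ := by monoidal
    _ = 𝟙 _ ⊗≫ (dual (𝟙_ C) ◁ coevl (𝟙_ C) ⊗≫ evl (𝟙_ C) ▷ dual (𝟙_ C)) ⊗≫ 𝟙 _ := by
      rw [← whisker_exchange]; monoidal
    _ = 𝟙 _ := by
      rw [show dual (𝟙_ C) ◁ coevl (𝟙_ C) ⊗≫ evl (𝟙_ C) ▷ dual (𝟙_ C) = _ from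
        ExactPairing.coevaluation_evaluation'' (𝟙_ C) (dual (𝟙_ C))]
      monoidal

theorem coevr_unit_comp_evr_unit :
    (coevr (𝟙_ C) ≫ (ρ_ _).hom) ≫ (λ_ _).inv ≫ evr (𝟙_ C) = 𝟙 (𝟙_ C) := by
  rw [← right_zigzag₁ (𝟙_ C)]
  monoidal

theorem coevl_unit_comp_leftUnitor :
    coevl (𝟙_ C) ≫ (λ_ _).hom = coevr (𝟙_ C) ≫ (ρ_ _).hom :=
  calc
    coevl (𝟙_ C) ≫ (λ_ _).hom =
        ((coevr (𝟙_ C) ≫ (ρ_ _).hom) ≫ (λ_ _).inv ≫ evr (𝟙_ C)) ≫ coevl (𝟙_ C) ≫ (λ_ _).hom := by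
      rw [coevr_unit_comp_evr_unit, Category.id_comp]
    _ = coevr (𝟙_ C) ≫ (ρ_ _).hom := by
      rw [← ev_unit, Category.assoc, evl_unit_comp_coevl_unit, Category.comp_id]

theorem coevl_comp_whiskerRight_eq_coevr_comp_whiskerLeft {Z : C} (f : Z ⟶ 𝟙_ C) :
    coevl Z ≫ f ▷ dual Z ≫ (λ_ _).hom = coevr Z ≫ dual Z ◁ f ≫ (ρ_ _).hom :=
  calc
    coevl Z ≫ f ▷ dual Z ≫ (λ_ _).hom = (coevl (𝟙_ C) ≫ (λ_ _).hom) ≫ pdual f := by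
      rw [← reassoc_of% coevl_comp_whiskerLeft_pdual f, leftUnitor_naturality, Category.assoc]
    _ = coevr Z ≫ dual Z ◁ f ≫ (ρ_ _).hom := by
      rw [coevl_unit_comp_leftUnitor, Category.assoc, ← rightUnitor_naturality,
        reassoc_of% coevr_comp_pdual_whiskerRight f]

/-- The pivotal isomorphism `X ≅ X**`: both objects are left duals (in Mathlib's convention) of
`dual X`, the first by the left duality of `X`, the second by the right duality of `dual X`. -/
def pivotalIso (X : C) : X ≅ dual (dual X) :=
  leftDualIso (leftExactPairing X) (rightExactPairing (dual X))

theorem coevl_comp_pivotalIso_hom_whiskerRight (X : C) :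
    coevl X ≫ (pivotalIso X).hom ▷ dual X = coevr (dual X) :=
  coevaluation_comp_leftDualIso_hom (leftExactPairing X) (rightExactPairing (dual X))

theorem whiskerLeft_pivotalIso_hom_comp_evr (X : C) :
    dual X ◁ (pivotalIso X).hom ≫ evr (dual X) = evl X :=
  leftDualIso_hom_comp_evaluation (leftExactPairing X) (rightExactPairing (dual X))

theorem coevl_dual_comp_mcon (X : C) :
    coevl (dual X) ≫ mcon X (dual X) =
      coevl (dual X ⊗ X) ≫ evl X ▷ _ ≫ (λ_ _).hom := by
  symm
  rw [← tensor_coevl_comp_whiskerLeft_mcon]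
  calc
    _ = 𝟙 _ ⊗≫ coevl (dual X) ⊗≫ dual X ◁ coevl X ▷ dual (dual X) ⊗≫
          ((dual X ⊗ X) ◁ mcon X (dual X) ≫ evl X ▷ _) ⊗≫ 𝟙 _ := by monoidal
    _ = 𝟙 _ ⊗≫ coevl (dual X) ⊗≫ (dual X ◁ coevl X ⊗≫ evl X ▷ dual X) ▷ dual (dual X) ⊗≫
          mcon X (dual X) := by
      rw [whisker_exchange]; monoidal
    _ = _ := by
      rw [show dual X ◁ coevl X ⊗≫ evl X ▷ dual X = _ from
        ExactPairing.coevaluation_evaluation'' X (dual X)]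
      monoidal

theorem coevr_comp_whiskerLeft_pivotalIso_hom_comp_mcon (X : C) :
    (coevr X ≫ dual X ◁ (pivotalIso X).hom) ≫ mcon X (dual X) =
      coevr (dual X ⊗ X) ≫ _ ◁ evl X ≫ (ρ_ _).hom := by
  symm
  rw [← tensor_coevr_comp_mcon_whiskerRight, ← coevl_comp_pivotalIso_hom_whiskerRight]
  calc
    _ = 𝟙 _ ⊗≫ coevr X ⊗≫ dual X ◁ coevl X ▷ X ⊗≫
          ((dual X ◁ (pivotalIso X).hom ≫ mcon X (dual X)) ▷ (dual X ⊗ X) ≫ _ ◁ evl X) ⊗≫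
          𝟙 _ := by
      simp only [comp_whiskerRight]; monoidal
    _ = 𝟙 _ ⊗≫ coevr X ⊗≫ dual X ◁ (coevl X ▷ X ⊗≫ X ◁ evl X) ⊗≫
          (dual X ◁ (pivotalIso X).hom ≫ mcon X (dual X)) := by
      rw [← whisker_exchange]; monoidal
    _ = _ := by
      rw [show coevl X ▷ X ⊗≫ X ◁ evl X = _ from
        ExactPairing.evaluation_coevaluation'' X (dual X)]
      monoidal

theorem coevr_comp_whiskerLeft_pivotalIso_hom (X : C) :
    coevr X ≫ dual X ◁ (pivotalIso X).hom = coevl (dual X) := by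
  rw [← cancel_mono (mcon X (dual X)), coevr_comp_whiskerLeft_pivotalIso_hom_comp_mcon,
    coevl_dual_comp_mcon, coevl_comp_whiskerRight_eq_coevr_comp_whiskerLeft]

theorem dimr_dual (X : C) : dimr (dual X) = diml X := by
  rw [dimr_eq_coevl_comp_evr, ← coevr_comp_whiskerLeft_pivotalIso_hom, Category.assoc,
    whiskerLeft_pivotalIso_hom_comp_evr, diml_eq_coevr_comp_evl]

theorem dimr_biproduct [Preadditive C] [MonoidalPreadditive C] {J : Type*} [Fintype J]
    (f : J → C) [HasBiproduct f] : dimr (⨁ f) = ∑ j, dimr (f j) := by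
  classical
  have total : ∑ j, biproduct.π f j ≫ biproduct.ι f j = 𝟙 (⨁ f) :=
    IsBilimit.total (biproduct.isBilimit f)
  calc
    dimr (⨁ f) = ∑ j, trr (biproduct.π f j ≫ biproduct.ι f j) := by
      rw [dimr, ← total]
      simp only [trr, sum_whiskerRight, Preadditive.sum_comp, Preadditive.comp_sum]
    _ = ∑ j, dimr (f j) := by
      simp only [trr_comp_comm, biproduct.ι_π_self, dimr]

end PivotalCat

section Linear

variable {k : Type w} [CommRing k] {C : Type u} [Category.{v} C] [Preadditive C]
  [CategoryTheory.Linear k C]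

variable (k) in
/-- The universal property of a finite direct sum as a product, as an isomorphism of
`k`-modules. -/
noncomputable def homBiproductLinearEquiv {J : Type*} [Finite J] (X : C) (f : J → C)
    [HasBiproduct f] : (X ⟶ ⨁ f) ≃ₗ[k] ∀ j, X ⟶ f j where
  toFun g j := g ≫ biproduct.π f j
  map_add' := by intros; ext; simp
  map_smul' := by intros; ext; simp
  invFun := biproduct.lift
  left_inv _ := by ext; simp
  right_inv _ := by ext; simp

theorem nonempty_iso_biproduct {J : Type*} [Fintype J] {X : C} {f : J → C} [HasBiproduct f]
    (p : ∀ j, X ⟶ f j) (q : ∀ j, f j ⟶ X) (total : ∑ j, p j ≫ q j = 𝟙 X)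
    (q_p_self : ∀ j, q j ≫ p j = 𝟙 (f j)) (q_p_ne : ∀ i j, i ≠ j → q i ≫ p j = 0) :
    Nonempty (X ≅ ⨁ f) := by
  classical
  let B : Bicone f :=
    { pt := X
      π := p
      ι := q
      ι_π := fun i j => by
        split_ifs with h
        · subst h; simpa using q_p_self i
        · exact q_p_ne i j h }
  exact ⟨biproduct.uniqueUpToIso f (isBilimitOfTotal B total)⟩

namespace IsSimpleObj

/-- Homs out of a simple object to an isomorphic one form a free module of rank one. -/
noncomputable def homLinearEquiv {i j : C} (hi : IsSimpleObj k i) (e : i ≅ j) :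
    k ≃ₗ[k] (i ⟶ j) :=
  LinearEquiv.ofBijective (LinearMap.toSpanSingleton k _ (𝟙 i)) hi ≪≫ₗ
    Linear.homCongr k (Iso.refl i) e

theorem finrank_hom_of_iso [Nontrivial k] {i j : C} (hi : IsSimpleObj k i) (e : i ≅ j) :
    Module.finrank k (i ⟶ j) = 1 := by
  rw [← (hi.homLinearEquiv e).finrank_eq, Module.finrank_self]

end IsSimpleObj

end Linear

section MonoidalLinear

variable (k : Type w) [CommRing k] {C : Type u} [Category.{v} C] [Preadditive C]
  [CategoryTheory.Linear k C] [MonoidalCategory C] [MonoidalPreadditive C]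
  [CategoryTheory.MonoidalLinear k C]

/-- Frobenius reciprocity `tensorLeftHomEquiv` as an isomorphism of `k`-modules. -/
def tensorLeftHomLinearEquiv (X Y Y' Z : C) [ExactPairing Y Y'] :
    (Y' ⊗ X ⟶ Z) ≃ₗ[k] (X ⟶ Y ⊗ Z) :=
  { tensorLeftHomEquiv X Y Y' Z with
    map_add' := by intros; simp [tensorLeftHomEquiv]
    map_smul' := by intros; simp [tensorLeftHomEquiv] }

theorem finrank_tensor_hom_unit [PivotalCat C] (Z b : C) :
    Module.finrank k (Z ⊗ b ⟶ 𝟙_ C) = Module.finrank k (b ⟶ PivotalCat.dual Z) :=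
  (tensorLeftHomLinearEquiv k b (PivotalCat.dual Z) Z (𝟙_ C) ≪≫ₗ
    Linear.homCongr k (Iso.refl b) (ρ_ (PivotalCat.dual Z))).finrank_eq

variable [MonoidalKCat k C]

theorem toScalar_smul_id (f : 𝟙_ C ⟶ 𝟙_ C) : toScalar k f • 𝟙 (𝟙_ C) = f :=
  (Equiv.ofBijective (fun a : k => a • 𝟙 (𝟙_ C)) MonoidalKCat.unit_free).apply_symm_apply f

variable {k} in
theorem toScalar_eq_iff {f : 𝟙_ C ⟶ 𝟙_ C} {r : k} : toScalar k f = r ↔ f = r • 𝟙 (𝟙_ C) :=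
  (Equiv.ofBijective (fun a : k => a • 𝟙 (𝟙_ C)) MonoidalKCat.unit_free).symm_apply_eq

theorem toScalar_sum {J : Type*} (s : Finset J) (f : J → (𝟙_ C ⟶ 𝟙_ C)) :
    toScalar k (∑ j ∈ s, f j) = ∑ j ∈ s, toScalar k (f j) := by
  simp only [toScalar_eq_iff, Finset.sum_smul, toScalar_smul_id]

variable [PivotalCat C]

theorem sdimr_congr {X Y : C} (e : X ≅ Y) : sdimr k X = sdimr k Y :=
  congrArg (toScalar k) (PivotalCat.dimr_congr e)

theorem sdimr_dual (X : C) : sdimr k (PivotalCat.dual X) = sdiml k X :=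
  congrArg (toScalar k) (PivotalCat.dimr_dual X)

theorem sdiml_eq_sdimr [SphericalCat C] (X : C) : sdiml k X = sdimr k X :=
  congrArg (toScalar k) (SphericalCat.tr_eq (𝟙 X))

theorem diml_eq_sdiml_smul_id (X : C) : PivotalCat.diml X = sdiml k X • 𝟙 (𝟙_ C) :=
  (toScalar_smul_id k _).symm

theorem sdiml_tensor (X Y : C) : sdiml k (X ⊗ Y) = sdiml k X * sdiml k Y := by
  rw [sdiml, toScalar_eq_iff, PivotalCat.diml_tensor]
  calc
    _ = sdiml k X • (PivotalCat.coevr Y ≫ PivotalCat.evl Y) := by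
      simp [diml_eq_sdiml_smul_id k X]
    _ = (sdiml k X * sdiml k Y) • 𝟙 (𝟙_ C) := by
      rw [← PivotalCat.diml_eq_coevr_comp_evl, diml_eq_sdiml_smul_id k Y, smul_smul]

theorem sdimr_biproduct {J : Type*} [Fintype J] (f : J → C) [HasBiproduct f] :
    sdimr k (⨁ f) = ∑ j, sdimr k (f j) := by
  rw [sdimr, PivotalCat.dimr_biproduct, toScalar_sum]
  rfl

end MonoidalLinear

namespace PreFusionCat

variable {k : Type w} [CommRing k] {C : Type u} [Category.{v} C] [Preadditive C]
  [CategoryTheory.Linear k C] [MonoidalCategory C] [MonoidalPreadditive C]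
  [CategoryTheory.MonoidalLinear k C] [HasFiniteBiproducts C] [PivotalCat C] [MonoidalKCat k C]
  [PreFusionCat k C]

variable (k) in
theorem exists_iso_biproduct_simple (X : C) :
    ∃ (n : ℕ) (f : Fin n → C), (∀ a, IsSimpleObj k (f a)) ∧ Nonempty (X ≅ ⨁ f) := by
  obtain ⟨n, f, p, q, simple, total, q_p_self, q_p_ne⟩ := semisimple (k := k) X
  exact ⟨n, f, simple, nonempty_iso_biproduct p q total q_p_self q_p_ne⟩

theorem subsingleton_hom_of_isEmpty_iso {i j : C} (hi : IsSimpleObj k i) (hj : IsSimpleObj k j)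
    (hij : IsEmpty (i ≅ j)) : Subsingleton (i ⟶ j) :=
  subsingleton_of_forall_eq 0 (simple_hom_zero hi hj hij)

theorem free_hom_of_isSimpleObj {i j : C} (hi : IsSimpleObj k i) (hj : IsSimpleObj k j) :
    Module.Free k (i ⟶ j) := by
  rcases isEmpty_or_nonempty (i ≅ j) with hij | ⟨⟨e⟩⟩
  · have := subsingleton_hom_of_isEmpty_iso hi hj hij
    infer_instance
  · exact .of_equiv (hi.homLinearEquiv e)

theorem finite_hom_of_isSimpleObj {i j : C} (hi : IsSimpleObj k i) (hj : IsSimpleObj k j) :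
    Module.Finite k (i ⟶ j) := by
  rcases isEmpty_or_nonempty (i ≅ j) with hij | ⟨⟨e⟩⟩
  · have := subsingleton_hom_of_isEmpty_iso hi hj hij
    infer_instance
  · exact .equiv (hi.homLinearEquiv e)

theorem finrank_hom_biproduct [Nontrivial k] {i : C} (hi : IsSimpleObj k i) {J : Type*}
    [Fintype J] {f : J → C} (hf : ∀ a, IsSimpleObj k (f a)) :
    Module.finrank k (i ⟶ ⨁ f) = ∑ a, Module.finrank k (i ⟶ f a) := by
  have (a : J) : Module.Free k (i ⟶ f a) := free_hom_of_isSimpleObj hi (hf a)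
  have (a : J) : Module.Finite k (i ⟶ f a) := finite_hom_of_isSimpleObj hi (hf a)
  rw [(homBiproductLinearEquiv k i f).finrank_eq, Module.finrank_pi_fintype]

theorem sum_sdimr_mul_finrank_hom_simple [Nontrivial k] {I : Finset C}
    (hI : IsRepresentativeSet k C ↑I) {j : C} (hj : IsSimpleObj k j) :
    ∑ b ∈ I, sdimr k b * (Module.finrank k (b ⟶ j) : k) = sdimr k j := by
  obtain ⟨i, ⟨hiI, ⟨e⟩⟩, i_unique⟩ := hI.2.2 j hj
  rw [Finset.sum_eq_single_of_mem i hiI]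
  · rw [(hI.2.1 i hiI).finrank_hom_of_iso e.symm, Nat.cast_one, mul_one, sdimr_congr k e]
  · intro b hb b_ne
    have := subsingleton_hom_of_isEmpty_iso (hI.2.1 b hb) hj
      ⟨fun e' => b_ne (i_unique b ⟨hb, ⟨e'.symm⟩⟩)⟩
    rw [Module.finrank_zero_of_subsingleton, Nat.cast_zero, mul_zero]

theorem sum_sdimr_mul_finrank_hom {I : Finset C} (hI : IsRepresentativeSet k C ↑I) (W : C) :
    ∑ b ∈ I, sdimr k b * (Module.finrank k (b ⟶ W) : k) = sdimr k W := by
  nontriviality k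
  obtain ⟨n, f, hf, ⟨e⟩⟩ := exists_iso_biproduct_simple k W
  calc
    _ = ∑ b ∈ I, ∑ a, sdimr k b * (Module.finrank k (b ⟶ f a) : k) := by
      refine Finset.sum_congr rfl fun b hb => ?_
      rw [(Linear.homCongr k (Iso.refl b) e).finrank_eq,
        finrank_hom_biproduct (hI.2.1 b hb) hf, Nat.cast_sum, Finset.mul_sum]
    _ = ∑ a, sdimr k (f a) := by
      rw [Finset.sum_comm]
      exact Finset.sum_congr rfl fun a _ => sum_sdimr_mul_finrank_hom_simple hI (hf a)
    _ = sdimr k W := by rw [sdimr_congr k e, sdimr_biproduct]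

theorem sum_sdimr_mul_finrank_tensor_hom_unit {I : Finset C} (hI : IsRepresentativeSet k C ↑I)
    (Z : C) : ∑ b ∈ I, sdimr k b * (Module.finrank k (Z ⊗ b ⟶ 𝟙_ C) : k) = sdiml k Z := by
  simp only [finrank_tensor_hom_unit, sum_sdimr_mul_finrank_hom hI, sdimr_dual]

end PreFusionCat

theorem spherical_fusion_bubble_identity_general (k : Type w) [CommRing k] (C : Type u)
    [Category.{v} C] [Preadditive C] [CategoryTheory.Linear k C] [MonoidalCategory C]
    [MonoidalPreadditive C] [CategoryTheory.MonoidalLinear k C] [HasFiniteBiproducts C]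
    [PivotalCat C] [MonoidalKCat k C] [PreFusionCat k C]
    (I : Finset C) (hI : IsRepresentativeSet k C ↑I) (X Y : C) :
    ∑ a ∈ I, ∑ b ∈ I, sdimr k a * sdimr k b *
        (Module.finrank k ((X ⊗ a ⊗ Y ⊗ b) ⟶ 𝟙_ C) : k) =
      sdiml k X * sdiml k Y * catDim k I := by
  have finrank_reassoc (a b : C) :
      Module.finrank k ((X ⊗ a ⊗ Y ⊗ b) ⟶ 𝟙_ C) =
        Module.finrank k ((X ⊗ a ⊗ Y) ⊗ b ⟶ 𝟙_ C) :=
    (Linear.homCongr k (whiskerLeftIso X (α_ a Y b).symm ≪≫ (α_ X (a ⊗ Y) b).symm)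
      (Iso.refl _)).finrank_eq
  calc
    _ = ∑ a ∈ I, sdimr k a * sdiml k (X ⊗ a ⊗ Y) := by
      simp only [mul_assoc, ← Finset.mul_sum, finrank_reassoc,
        PreFusionCat.sum_sdimr_mul_finrank_tensor_hom_unit hI]
    _ = sdiml k X * sdiml k Y * catDim k I := by
      rw [catDim, Finset.mul_sum]
      refine Finset.sum_congr rfl fun a _ => ?_
      rw [sdiml_tensor, sdiml_tensor]
      ring

/-- Bubble identity (Lemma 4.3, formula (4.1)): in a spherical fusion category over `k`
with representative set `I` of simple objects, for all objects `X, Y`: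
`∑_{a,b ∈ I} dim(a)·dim(b)·N^𝟙_{X⊗a⊗Y⊗b} = dim(X)·dim(Y)·dim(C)` in `k`, where the
multiplicity `N^𝟙_Z = rank_k Hom(Z, 𝟙)` is regarded in `k` via `ℤ → k`. -/
theorem spherical_fusion_bubble_identity (k : Type w) [CommRing k] (C : Type u)
    [Category.{v} C] [Preadditive C] [CategoryTheory.Linear k C] [MonoidalCategory C]
    [MonoidalPreadditive C] [CategoryTheory.MonoidalLinear k C]
    [CategoryTheory.Limits.HasFiniteBiproducts C] [PivotalCat C] [MonoidalKCat k C]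
    [PreFusionCat k C] [FusionCat k C] [SphericalCat C]
    (I : Finset C) (hI : IsRepresentativeSet k C ↑I) (X Y : C) :
    ∑ a ∈ I, ∑ b ∈ I, sdiml k a * sdiml k b *
        (Module.finrank k ((X ⊗ a ⊗ Y ⊗ b) ⟶ 𝟙_ C) : k) =
      sdiml k X * sdiml k Y * catDim k I := by
  simpa only [sdiml_eq_sdimr] using spherical_fusion_bubble_identity_general k C I hI X Y
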